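/- arXiv:1804.10128 — 4 statements merged into one kernel-verified Lean document; each statement's English description precedes it below -/
import Mathlib

section
/- Let q be a prime number, and t an integer with t² < 4q, so that R = ℤ[X]/(X² − tX + q) is an order in an imaginary quadratic field. Let ℓ be a prime number such that the polynomial X² − tX + q has two distinct roots modulo ℓ. Then there exist exactly two distinct prime ideals 𝔩₁ ≠ 𝔩₂ of R whose residue rings R/𝔩₁ and R/𝔩₂ have cardinality ℓ; their product 𝔩₁𝔩₂ equals the principal ideal ℓR; and every ideal I of R with card(R/I) = ℓ equals 𝔩₁ or 𝔩₂. -/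
open Polynomial

/-- The quadratic order `R = ℤ[X]/(X² − tX + q)`. -/
def quadOrder (t q : ℤ) : Type :=
  Polynomial ℤ ⧸ Ideal.span {Polynomial.X ^ 2 - Polynomial.C t * Polynomial.X + Polynomial.C q}

noncomputable instance (t q : ℤ) : CommRing (quadOrder t q) :=
  Ideal.Quotient.commRing _

/-- The class of `X`. -/
noncomputable def quadGen (t q : ℤ) : quadOrder t q :=
  Ideal.Quotient.mk _ (Polynomial.X : Polynomial ℤ)

/-- The quotient map. -/
noncomputable def quadMk (t q : ℤ) : Polynomial ℤ →+* quadOrder t q :=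
  Ideal.Quotient.mk _

theorem quadMk_surj (t q : ℤ) : Function.Surjective (quadMk t q) :=
  Ideal.Quotient.mk_surjective

theorem quadMk_C (t q a : ℤ) : quadMk t q (C a) = (a : quadOrder t q) :=
  eq_intCast ((quadMk t q).comp C) a

theorem quadGen_sq (t q : ℤ) :
    quadGen t q ^ 2 - (t : quadOrder t q) * quadGen t q + (q : quadOrder t q) = 0 := by
  have h : quadMk t q (X ^ 2 - C t * X + C q) = 0 :=
    Ideal.Quotient.eq_zero_iff_mem.2 (Ideal.subset_span rfl)
  have hX : quadMk t q X = quadGen t q := rfl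
  have hC : ∀ a : ℤ, quadMk t q (C a) = (a : quadOrder t q) := quadMk_C t q
  rw [map_add, map_sub, map_mul, map_pow, hX, hC, hC] at h
  exact h

theorem quad_repr (t q : ℤ) (z : quadOrder t q) :
    ∃ a b : ℤ, z = (a : quadOrder t q) + (b : quadOrder t q) * quadGen t q := by
  obtain ⟨p, rfl⟩ := quadMk_surj t q z
  have hX : quadMk t q X = quadGen t q := rfl
  induction p using Polynomial.induction_on' with
  | add p r hp hr =>
    obtain ⟨a, b, h⟩ := hp
    obtain ⟨c, d, h'⟩ := hr
    refine ⟨a + c, b + d, ?_⟩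
    rw [map_add, h, h']; push_cast; ring
  | monomial n c =>
    induction n with
    | zero => exact ⟨c, 0, by rw [monomial_zero_left, quadMk_C, Int.cast_zero, zero_mul, add_zero]⟩
    | succ n ih =>
      obtain ⟨a, b, h⟩ := ih
      refine ⟨-(b * q), a + b * t, ?_⟩
      rw [← monomial_mul_X, map_mul, h, hX]
      push_cast
      linear_combination (b : quadOrder t q) * quadGen_sq t q

theorem quad_hom_exists (t q : ℤ) {S : Type} [CommRing S] (r : S)
    (hr : r ^ 2 - (t : S) * r + (q : S) = 0) :
    ∃ φ : quadOrder t q →+* S, φ (quadGen t q) = r := by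
  refine ⟨Ideal.Quotient.lift _ (eval₂RingHom (Int.castRingHom S) r) ?_, ?_⟩
  · have : Ideal.span {(X ^ 2 - C t * X + C q : ℤ[X])} ≤
        RingHom.ker (eval₂RingHom (Int.castRingHom S) r) := by
      rw [Ideal.span_singleton_le_iff_mem, RingHom.mem_ker]
      rw [coe_eval₂RingHom, eval₂_add, eval₂_sub, eval₂_mul, eval₂_pow, eval₂_X, eval₂_C, eval₂_C]
      exact hr
    exact fun a ha => this ha
  · exact (Ideal.Quotient.lift_mk _ _ _).trans (by simp)

theorem quad_hom_apply (t q : ℤ) {S : Type} [CommRing S] (φ : quadOrder t q →+* S) (a b : ℤ) :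
    φ ((a : quadOrder t q) + (b : quadOrder t q) * quadGen t q) =
      (a : S) + (b : S) * φ (quadGen t q) := by
  rw [map_add, map_mul, map_intCast, map_intCast]

theorem quad_hom_ext (t q : ℤ) {S : Type} [CommRing S] (φ ψ : quadOrder t q →+* S)
    (h : φ (quadGen t q) = ψ (quadGen t q)) : φ = ψ := by
  ext z
  obtain ⟨a, b, rfl⟩ := quad_repr t q z
  rw [quad_hom_apply, quad_hom_apply, h]

/-- Let `q` be a prime number and `t` an integer with `t² < 4q`, so that
`R = ℤ[X]/(X² − tX + q)` is an order in an imaginary quadratic field.  Let `ℓ` be a prime such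
that `X² − tX + q` has two distinct roots modulo `ℓ`.  Then there are exactly two distinct
prime ideals `𝔩₁ ≠ 𝔩₂` of `R` of residue cardinality `ℓ`, their product is the principal ideal
`ℓR`, and every ideal of `R` of residue cardinality `ℓ` is `𝔩₁` or `𝔩₂`. -/
theorem elkies_prime_splits
    (q : ℕ) (hq : q.Prime) (t : ℤ) (ht : t ^ 2 < 4 * q)
    (ℓ : ℕ) (hℓ : ℓ.Prime)
    (hroots : ∃ r s : ZMod ℓ, r ≠ s ∧
      r ^ 2 - (t : ZMod ℓ) * r + (q : ZMod ℓ) = 0 ∧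
      s ^ 2 - (t : ZMod ℓ) * s + (q : ZMod ℓ) = 0) :
    ∃ 𝔩₁ 𝔩₂ : Ideal (quadOrder t (q : ℤ)), 𝔩₁ ≠ 𝔩₂ ∧ 𝔩₁.IsPrime ∧ 𝔩₂.IsPrime ∧
      Nat.card (quadOrder t (q : ℤ) ⧸ 𝔩₁) = ℓ ∧ Nat.card (quadOrder t (q : ℤ) ⧸ 𝔩₂) = ℓ ∧
      𝔩₁ * 𝔩₂ = Ideal.span {(ℓ : quadOrder t (q : ℤ))} ∧
      ∀ I : Ideal (quadOrder t (q : ℤ)), Nat.card (quadOrder t (q : ℤ) ⧸ I) = ℓ →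
        I = 𝔩₁ ∨ I = 𝔩₂ := by
  have : Fact ℓ.Prime := ⟨hℓ⟩
  obtain ⟨r, s, hrs, hr, hs⟩ := hroots
  obtain ⟨φ, hφ⟩ := quad_hom_exists t q r (by simpa using hr)
  obtain ⟨ψ, hψ⟩ := quad_hom_exists t q s (by simpa using hs)
  have hφs : Function.Surjective φ := ZMod.ringHom_surjective φ
  have hψs : Function.Surjective ψ := ZMod.ringHom_surjective ψ
  have hsum : r + s = t := by
    have h0 : (r - s) * (r + s - t) = 0 := by linear_combination hr - hs
    rcases mul_eq_zero.1 h0 with h | h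
    · exact absurd (sub_eq_zero.1 h) hrs
    · exact sub_eq_zero.1 h
  have hmem : ∀ z, φ z = 0 → ψ z = 0 → z ∈ Ideal.span {(ℓ : quadOrder t (q : ℤ))} := by
    intro z h1 h2
    obtain ⟨a, b, rfl⟩ := quad_repr t q z
    rw [quad_hom_apply, hφ] at h1
    rw [quad_hom_apply, hψ] at h2
    have hb : (b : ZMod ℓ) = 0 := by
      have h0 : (b : ZMod ℓ) * (r - s) = 0 := by linear_combination h1 - h2
      rcases mul_eq_zero.1 h0 with h | h
      · exact h
      · exact absurd (sub_eq_zero.1 h) hrs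
    have ha : (a : ZMod ℓ) = 0 := by simpa [hb] using h1
    obtain ⟨a', rfl⟩ := (ZMod.intCast_zmod_eq_zero_iff_dvd a ℓ).1 ha
    obtain ⟨b', rfl⟩ := (ZMod.intCast_zmod_eq_zero_iff_dvd b ℓ).1 hb
    refine Ideal.mem_span_singleton.2
      ⟨(a' : quadOrder t (q : ℤ)) + (b' : quadOrder t (q : ℤ)) * quadGen t q, ?_⟩
    push_cast; ring
  have hm1 : (RingHom.ker φ).IsMaximal := RingHom.ker_isMaximal_of_surjective φ hφs
  have hm2 : (RingHom.ker ψ).IsMaximal := RingHom.ker_isMaximal_of_surjective ψ hψs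
  have hne : RingHom.ker φ ≠ RingHom.ker ψ := by
    intro h
    obtain ⟨n, hn⟩ := ZMod.intCast_surjective r
    have h1 : quadGen t q - (n : quadOrder t (q : ℤ)) ∈ RingHom.ker φ := by
      rw [RingHom.mem_ker, map_sub, hφ, map_intCast, hn, sub_self]
    rw [h, RingHom.mem_ker, map_sub, hψ, map_intCast, hn] at h1
    exact hrs (sub_eq_zero.1 h1).symm
  refine ⟨RingHom.ker φ, RingHom.ker ψ, hne, hm1.isPrime, hm2.isPrime, ?_, ?_, ?_, ?_⟩
  · rw [Nat.card_congr (RingHom.quotientKerEquivOfSurjective hφs).toEquiv, Nat.card_zmod]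
  · rw [Nat.card_congr (RingHom.quotientKerEquivOfSurjective hψs).toEquiv, Nat.card_zmod]
  · rw [Ideal.mul_eq_inf_of_coprime (Ideal.isCoprime_of_isMaximal hne).sup_eq]
    apply le_antisymm
    · exact fun z hz => hmem z hz.1 hz.2
    · rw [Ideal.span_singleton_le_iff_mem]
      exact ⟨by simp [RingHom.mem_ker], by simp [RingHom.mem_ker]⟩
  · intro I hI
    have : Finite (quadOrder t (q : ℤ) ⧸ I) :=
      Nat.finite_of_card_ne_zero (by rw [hI]; exact hℓ.ne_zero)
    let _ := Fintype.ofFinite (quadOrder t (q : ℤ) ⧸ I)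
    let e := ZMod.ringEquivOfPrime (quadOrder t (q : ℤ) ⧸ I) hℓ
      (by rw [← Nat.card_eq_fintype_card, hI])
    let θ : quadOrder t (q : ℤ) →+* ZMod ℓ := e.symm.toRingHom.comp (Ideal.Quotient.mk I)
    have hθ : RingHom.ker θ = I := by
      ext z
      rw [RingHom.mem_ker]
      change e.symm (Ideal.Quotient.mk I z) = 0 ↔ _
      rw [map_eq_zero_iff _ e.symm.injective, Ideal.Quotient.eq_zero_iff_mem]
    have hx : (θ (quadGen t q) - r) * (θ (quadGen t q) - s) = 0 := by
      have h := congrArg θ (quadGen_sq t q)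
      rw [map_add, map_sub, map_mul, map_pow, map_intCast, map_intCast, map_zero] at h
      push_cast at h
      linear_combination h - hr + (r - θ (quadGen t q)) * hsum
    rcases mul_eq_zero.1 hx with h | h
    · left
      rw [← hθ, quad_hom_ext t q θ φ (by rw [hφ, sub_eq_zero.1 h])]
    · right
      rw [← hθ, quad_hom_ext t q θ ψ (by rw [hψ, sub_eq_zero.1 h])]
end

section
/- Let R = ℤ[f,g] and let T : y² + ((1+g)x + f)y = x³ + fx² be the Weierstrass curve over R with a₁ = 1+g, a₂ = f, a₃ = f, a₄ = a₆ = 0. For N ≥ 1 let b_N = ψ_N(0,0) ∈ ℤ[f,g] be the N-th division polynomial of T evaluated at (x, y) = (0, 0). Then b_N ≠ 0, and the multiplicity of the prime element f of ℤ[f,g] in b_N is exactly v_N, where v_N = 3k² if N = 3k, v_N = 3k² + 2k if N = 3k + 1, and v_N = 3k² + 4k + 1 if N = 3k + 2 (k ≥ 0): that is, f^{v_N} divides b_N and f^{v_N + 1} does not divide b_N. -/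
open Polynomial WeierstrassCurve

/-- The universal Tate normal curve `T : y² + ((1+g)x + f)y = x³ + fx²` over `ℤ[f,g]`,
where `f = X 0` and `g = X 1` in `MvPolynomial (Fin 2) ℤ`. -/
noncomputable def tateCurve : WeierstrassCurve (MvPolynomial (Fin 2) ℤ) :=
  ⟨1 + MvPolynomial.X 1, MvPolynomial.X 0, MvPolynomial.X 0, 0, 0⟩

/-- `b_N = ψ_N(0,0)`, the `N`-th division polynomial of the universal Tate normal curve
evaluated at `(x, y) = (0, 0)`. -/
noncomputable def tateB (N : ℤ) : MvPolynomial (Fin 2) ℤ :=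
  (tateCurve.Ψ N).evalEval 0 0

/-- The exact multiplicity `v_N` of `f` in `b_N`:
`v_{3k} = 3k²`, `v_{3k+1} = 3k² + 2k`, `v_{3k+2} = 3k² + 4k + 1`. -/
def tateVal (N : ℕ) : ℕ :=
  if N % 3 = 0 then 3 * (N / 3) ^ 2
  else if N % 3 = 1 then 3 * (N / 3) ^ 2 + 2 * (N / 3)
  else 3 * (N / 3) ^ 2 + 4 * (N / 3) + 1

namespace TateAux

open MvPolynomial in
/-- The specialization `f = 0`, `g = -1`. -/
noncomputable def sp : MvPolynomial (Fin 2) ℤ →+* ℤ := MvPolynomial.eval ![0, -1]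

/-- The specialized leading coefficients. -/
def lc (N : ℕ) : ℤ :=
  if N % 3 = 0 then -((-1) ^ (N / 3) * (N / 3 : ℕ)) else (-1) ^ (N / 3)

lemma lc0 (k : ℕ) : lc (3 * k) = -((-1) ^ k * k) := by
  simp [lc]

lemma lc1 (k : ℕ) : lc (3 * k + 1) = (-1) ^ k := by
  have h : (3 * k + 1) / 3 = k := by omega
  have h' : (3 * k + 1) % 3 = 1 := by omega
  simp [lc, h, h']

lemma lc2 (k : ℕ) : lc (3 * k + 2) = (-1) ^ k := by
  have h : (3 * k + 2) / 3 = k := by omega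
  have h' : (3 * k + 2) % 3 = 2 := by omega
  simp [lc, h, h']

lemma tv0 (k : ℕ) : tateVal (3 * k) = 3 * k ^ 2 := by
  simp [tateVal]

lemma tv1 (k : ℕ) : tateVal (3 * k + 1) = 3 * k ^ 2 + 2 * k := by
  have h : (3 * k + 1) / 3 = k := by omega
  have h' : (3 * k + 1) % 3 = 1 := by omega
  simp [tateVal, h, h']

lemma tv2 (k : ℕ) : tateVal (3 * k + 2) = 3 * k ^ 2 + 4 * k + 1 := by
  have h : (3 * k + 2) / 3 = k := by omega
  have h' : (3 * k + 2) % 3 = 2 := by omega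
  simp [tateVal, h, h']

lemma lc_ne (N : ℕ) (hN : 1 ≤ N) : lc N ≠ 0 := by
  unfold lc
  split_ifs with h
  · have : N / 3 ≠ 0 := by omega
    simp only [ne_eq, neg_eq_zero, mul_eq_zero, not_or]
    exact ⟨by simp, by exact_mod_cast this⟩
  · simp

local notation "F" => (MvPolynomial.X 0 : MvPolynomial (Fin 2) ℤ)
local notation "G" => (MvPolynomial.X 1 : MvPolynomial (Fin 2) ℤ)

lemma sp_F : sp F = 0 := by simp [sp]
lemma sp_G : sp G = -1 := by simp [sp]

lemma tateB_eq (N : ℤ) : tateB N = normEDS F (F ^ 3) (G * F ^ 4) N := by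
  have h2 : tateCurve.ψ₂.evalEval 0 0 = F := by
    simp [tateCurve, WeierstrassCurve.ψ₂, WeierstrassCurve.Affine.polynomialY, evalEval]
  have h2' : tateCurve.Ψ₂Sq.eval 0 = F ^ 2 := by
    simp [tateCurve, WeierstrassCurve.Ψ₂Sq, WeierstrassCurve.b₆]
  have h3 : tateCurve.Ψ₃.eval 0 = F ^ 3 := by
    simp [tateCurve, WeierstrassCurve.Ψ₃, WeierstrassCurve.b₈]; ring
  have h4 : tateCurve.preΨ₄.eval 0 = G * F ^ 4 := by
    simp [tateCurve, WeierstrassCurve.preΨ₄, WeierstrassCurve.b₈, WeierstrassCurve.b₄,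
      WeierstrassCurve.b₆]; ring
  have hp : (tateCurve.preΨ N).eval 0 = preNormEDS (F ^ 4) (F ^ 3) (G * F ^ 4) N := by
    have := map_preNormEDS (f := Polynomial.evalRingHom (0 : MvPolynomial (Fin 2) ℤ))
      (tateCurve.Ψ₂Sq ^ 2) tateCurve.Ψ₃ tateCurve.preΨ₄ N
    simp only [Polynomial.coe_evalRingHom, Polynomial.eval_pow, h2', h3, h4] at this
    rw [WeierstrassCurve.preΨ, this]
    congr 1
    ring
  rw [tateB, WeierstrassCurve.Ψ, normEDS, evalEval_mul, evalEval_C, hp]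
  split_ifs
  · rw [h2]
  · simp

/-- The sequence. -/
noncomputable def b (n : ℕ) : MvPolynomial (Fin 2) ℤ := normEDS F (F ^ 3) (G * F ^ 4) n

lemma b_odd (m : ℕ) : b (2 * (m + 1) + 1) = b (m + 3) * b (m + 1) ^ 3 - b m * b (m + 2) ^ 3 := by
  have := normEDS_odd F (F ^ 3) (G * F ^ 4) ((m : ℤ) + 1)
  simp only [b]
  push_cast
  rw [this]
  ring_nf

lemma b_even (m : ℕ) : b (2 * (m + 2)) * F =
    b (m + 2) * (b (m + 4) * b (m + 1) ^ 2 - b m * b (m + 3) ^ 2) := by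
  have := normEDS_even F (F ^ 3) (G * F ^ 4) ((m : ℤ) + 2)
  simp only [b]
  push_cast
  rw [this]
  ring_nf

/-- Exact shape of the leading term. -/
def Good (n : ℕ) : Prop := ∃ u, b n = F ^ tateVal n * u ∧ sp u = lc n

lemma good0 {k : ℕ} (h : Good (3 * k)) :
    ∃ u, b (3 * k) = F ^ (3 * k ^ 2) * u ∧ sp u = -((-1) ^ k * k) := by
  simpa only [Good, tv0, lc0] using h
lemma good1 {k : ℕ} (h : Good (3 * k + 1)) :
    ∃ u, b (3 * k + 1) = F ^ (3 * k ^ 2 + 2 * k) * u ∧ sp u = (-1) ^ k := by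
  simpa only [Good, tv1, lc1] using h
lemma good2 {k : ℕ} (h : Good (3 * k + 2)) :
    ∃ u, b (3 * k + 2) = F ^ (3 * k ^ 2 + 4 * k + 1) * u ∧ sp u = (-1) ^ k := by
  simpa only [Good, tv2, lc2] using h

lemma odd0 (j : ℕ) (h1 : Good (3 * (j + 1) + 2)) (h2 : Good (3 * (j + 1)))
    (h3 : Good (3 * j + 2)) (h4 : Good (3 * (j + 1) + 1)) : Good (3 * (2 * j + 2) + 1) := by
  obtain ⟨u1, e1, s1⟩ := good2 h1
  obtain ⟨u2, e2, s2⟩ := good0 h2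
  obtain ⟨u3, e3, s3⟩ := good2 h3
  obtain ⟨u4, e4, s4⟩ := good1 h4
  refine ⟨F * u1 * u2 ^ 3 - u3 * u4 ^ 3, ?_, ?_⟩
  · have := b_odd (3 * j + 2)
    rw [show 3 * (2 * j + 2) + 1 = 2 * (3 * j + 2 + 1) + 1 by ring, this,
      show 2 * (3 * j + 2 + 1) + 1 = 3 * (2 * j + 2) + 1 by ring, tv1]
    change b (3 * (j + 1) + 2) * b (3 * (j + 1)) ^ 3 - b (3 * j + 2) * b (3 * (j + 1) + 1) ^ 3 = _
    rw [e1, e2, e3, e4]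
    ring
  · rw [lc1]
    simp only [map_sub, map_mul, map_pow, sp_F, s1, s2, s3, s4]
    rcases neg_one_pow_eq_or ℤ j with h | h <;> simp [pow_add, pow_mul, h]

lemma odd1 (j : ℕ) (h1 : Good (3 * (j + 1))) (h2 : Good (3 * j + 1))
    (h3 : Good (3 * j)) (h4 : Good (3 * j + 2)) : Good (3 * (2 * j + 1)) := by
  obtain ⟨u1, e1, s1⟩ := good0 h1
  obtain ⟨u2, e2, s2⟩ := good1 h2
  obtain ⟨u3, e3, s3⟩ := good0 h3
  obtain ⟨u4, e4, s4⟩ := good2 h4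
  refine ⟨u1 * u2 ^ 3 - u3 * u4 ^ 3, ?_, ?_⟩
  · have := b_odd (3 * j)
    rw [show 3 * (2 * j + 1) = 2 * (3 * j + 1) + 1 by ring, this,
      show 2 * (3 * j + 1) + 1 = 3 * (2 * j + 1) by ring, tv0]
    change b (3 * (j + 1)) * b (3 * j + 1) ^ 3 - b (3 * j) * b (3 * j + 2) ^ 3 = _
    rw [e1, e2, e3, e4]
    ring
  · rw [lc0]
    simp only [map_sub, map_mul, map_pow, s1, s2, s3, s4]
    rcases neg_one_pow_eq_or ℤ j with h | h <;> simp [pow_add, pow_mul, h] <;> ring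

lemma odd2 (j : ℕ) (h1 : Good (3 * (j + 1) + 1)) (h2 : Good (3 * j + 2))
    (h3 : Good (3 * j + 1)) (h4 : Good (3 * (j + 1))) : Good (3 * (2 * j + 1) + 2) := by
  obtain ⟨u1, e1, s1⟩ := good1 h1
  obtain ⟨u2, e2, s2⟩ := good2 h2
  obtain ⟨u3, e3, s3⟩ := good1 h3
  obtain ⟨u4, e4, s4⟩ := good0 h4
  refine ⟨u1 * u2 ^ 3 - F * u3 * u4 ^ 3, ?_, ?_⟩
  · have := b_odd (3 * j + 1)
    rw [show 3 * (2 * j + 1) + 2 = 2 * (3 * j + 1 + 1) + 1 by ring, this,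
      show 2 * (3 * j + 1 + 1) + 1 = 3 * (2 * j + 1) + 2 by ring, tv2]
    change b (3 * (j + 1) + 1) * b (3 * j + 2) ^ 3 - b (3 * j + 1) * b (3 * (j + 1)) ^ 3 = _
    rw [e1, e2, e3, e4]
    ring
  · rw [lc2]
    simp only [map_sub, map_mul, map_pow, sp_F, s1, s2, s3, s4]
    rcases neg_one_pow_eq_or ℤ j with h | h <;> simp [pow_add, pow_mul, h]

lemma F_ne : F ≠ 0 := MvPolynomial.X_ne_zero 0

lemma even0 (j : ℕ) (h0 : Good (3 * (j + 1))) (h1 : Good (3 * (j + 1) + 2))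
    (h2 : Good (3 * j + 2)) (h3 : Good (3 * j + 1)) (h4 : Good (3 * (j + 1) + 1)) :
    Good (3 * (2 * j + 2)) := by
  obtain ⟨u0, e0, s0⟩ := good0 h0
  obtain ⟨u1, e1, s1⟩ := good2 h1
  obtain ⟨u2, e2, s2⟩ := good2 h2
  obtain ⟨u3, e3, s3⟩ := good1 h3
  obtain ⟨u4, e4, s4⟩ := good1 h4
  refine ⟨u0 * (u1 * u2 ^ 2 - u3 * u4 ^ 2), ?_, ?_⟩
  · apply mul_right_cancel₀ F_ne
    have := b_even (3 * j + 1)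
    rw [show 3 * (2 * j + 2) = 2 * (3 * j + 1 + 2) by ring, this,
      show 2 * (3 * j + 1 + 2) = 3 * (2 * j + 2) by ring, tv0]
    change b (3 * (j + 1)) * (b (3 * (j + 1) + 2) * b (3 * j + 2) ^ 2
      - b (3 * j + 1) * b (3 * (j + 1) + 1) ^ 2) = _
    rw [e0, e1, e2, e3, e4]
    ring
  · rw [lc0]
    simp only [map_sub, map_mul, map_pow, s0, s1, s2, s3, s4]
    rcases neg_one_pow_eq_or ℤ j with h | h <;> simp [pow_add, pow_mul, h] <;> ring

lemma even1 (j : ℕ) (h0 : Good (3 * (j + 1) + 1)) (h1 : Good (3 * (j + 2)))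
    (h2 : Good (3 * (j + 1))) (h3 : Good (3 * j + 2)) (h4 : Good (3 * (j + 1) + 2)) :
    Good (3 * (2 * j + 2) + 2) := by
  obtain ⟨u0, e0, s0⟩ := good1 h0
  obtain ⟨u1, e1, s1⟩ := good0 h1
  obtain ⟨u2, e2, s2⟩ := good0 h2
  obtain ⟨u3, e3, s3⟩ := good2 h3
  obtain ⟨u4, e4, s4⟩ := good2 h4
  refine ⟨u0 * (F * u1 * u2 ^ 2 - u3 * u4 ^ 2), ?_, ?_⟩
  · apply mul_right_cancel₀ F_ne
    have := b_even (3 * j + 2)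
    rw [show 3 * (2 * j + 2) + 2 = 2 * (3 * j + 2 + 2) by ring, this,
      show 2 * (3 * j + 2 + 2) = 3 * (2 * j + 2) + 2 by ring, tv2]
    change b (3 * (j + 1) + 1) * (b (3 * (j + 2)) * b (3 * (j + 1)) ^ 2
      - b (3 * j + 2) * b (3 * (j + 1) + 2) ^ 2) = _
    rw [e0, e1, e2, e3, e4]
    ring
  · rw [lc2]
    simp only [map_sub, map_mul, map_pow, sp_F, s0, s1, s2, s3, s4]
    rcases neg_one_pow_eq_or ℤ j with h | h <;> simp [pow_add, pow_mul, h]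

lemma even2 (j : ℕ) (h0 : Good (3 * j + 2)) (h1 : Good (3 * (j + 1) + 1))
    (h2 : Good (3 * j + 1)) (h3 : Good (3 * j)) (h4 : Good (3 * (j + 1))) :
    Good (3 * (2 * j + 1) + 1) := by
  obtain ⟨u0, e0, s0⟩ := good2 h0
  obtain ⟨u1, e1, s1⟩ := good1 h1
  obtain ⟨u2, e2, s2⟩ := good1 h2
  obtain ⟨u3, e3, s3⟩ := good0 h3
  obtain ⟨u4, e4, s4⟩ := good0 h4
  refine ⟨u0 * (u1 * u2 ^ 2 - F * u3 * u4 ^ 2), ?_, ?_⟩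
  · apply mul_right_cancel₀ F_ne
    have := b_even (3 * j)
    rw [show 3 * (2 * j + 1) + 1 = 2 * (3 * j + 2) by ring, this,
      show 2 * (3 * j + 2) = 3 * (2 * j + 1) + 1 by ring, tv1]
    change b (3 * j + 2) * (b (3 * (j + 1) + 1) * b (3 * j + 1) ^ 2
      - b (3 * j) * b (3 * (j + 1)) ^ 2) = _
    rw [e0, e1, e2, e3, e4]
    ring
  · rw [lc1]
    simp only [map_sub, map_mul, map_pow, sp_F, s0, s1, s2, s3, s4]
    rcases neg_one_pow_eq_or ℤ j with h | h <;> simp [pow_add, pow_mul, h]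

lemma good (n : ℕ) : Good n := by
  induction n using Nat.strong_induction_on with
  | _ n ih =>
  by_cases h5 : n < 5
  · interval_cases n
    · exact ⟨0, by simp [b], by simp [lc]⟩
    · exact ⟨1, by simp [b, tateVal], by simp [lc]⟩
    · exact ⟨1, by simp [b, tateVal], by simp [lc]⟩
    · exact ⟨1, by simp [b, tateVal], by simp [lc]⟩
    · exact ⟨G, by simp [b, tateVal]; ring, by simp [lc, sp_G]⟩
  have hc : ∃ j, n = 3 * (2 * j + 2) + 1 ∨ n = 3 * (2 * j + 1) ∨ n = 3 * (2 * j + 1) + 2 ∨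
      n = 3 * (2 * j + 2) ∨ n = 3 * (2 * j + 2) + 2 ∨ n = 3 * (2 * j + 1) + 1 := by
    by_cases h : (n / 3) % 2 = 1
    · exact ⟨n / 6, by omega⟩
    · exact ⟨n / 6 - 1, by omega⟩
  obtain ⟨j, h | h | h | h | h | h⟩ := hc <;> subst h
  · apply odd0 <;> (apply ih; omega)
  · apply odd1 <;> (apply ih; omega)
  · apply odd2 <;> (apply ih; omega)
  · apply even0 <;> (apply ih; omega)
  · apply even1 <;> (apply ih; omega)
  · apply even2 <;> (apply ih; omega)

end TateAux

/-- For `N ≥ 1`, the polynomial `b_N = ψ_N(0,0) ∈ ℤ[f,g]` is nonzero, and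
the multiplicity of the prime element `f` in `b_N` is exactly `v_N`: `f^{v_N}` divides `b_N`
and `f^{v_N + 1}` does not. -/
theorem tateB_multiplicity (N : ℕ) (hN : 1 ≤ N) :
    tateB N ≠ 0 ∧
      (MvPolynomial.X 0 : MvPolynomial (Fin 2) ℤ) ^ tateVal N ∣ tateB N ∧
      ¬ (MvPolynomial.X 0 : MvPolynomial (Fin 2) ℤ) ^ (tateVal N + 1) ∣ tateB N := by
  obtain ⟨u, hu, hs⟩ := TateAux.good N
  have hb : tateB N = MvPolynomial.X 0 ^ tateVal N * u := by
    rw [TateAux.tateB_eq]; exact hu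
  have hnd : ¬ (MvPolynomial.X 0 : MvPolynomial (Fin 2) ℤ) ^ (tateVal N + 1) ∣ tateB N := by
    rw [hb, pow_succ]
    intro h
    have h' := (mul_dvd_mul_iff_left (pow_ne_zero _ TateAux.F_ne)).1 h
    obtain ⟨w, rfl⟩ := h'
    rw [map_mul, TateAux.sp_F, zero_mul] at hs
    exact TateAux.lc_ne N hN hs.symm
  exact ⟨fun h => hnd (h ▸ dvd_zero _), hb ▸ dvd_mul_right _ _, hnd⟩
end

section
/- Let k be a field of characteristic different from 2 and let E : y² = x³ + ax + b be an elliptic curve over k (4a³ + 27b² ≠ 0). The following are equivalent: (i) there is an admissible change of Weierstrass variables over k transforming E into a curve of the form y² = x³ + Ax² + Cx with C a nonzero square in k (equivalently, E admits a Montgomery model B·y² = x³ + A·x² + x over k); (ii) there exists α ∈ k with α³ + aα + b = 0 such that 3α² + a is a square in k. -/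
open WeierstrassCurve

/-- The short Weierstrass curve `y² = x³ + Ax + B`. -/
def shortCurve {k : Type*} [CommRing k] (A B : k) : WeierstrassCurve k :=
  ⟨0, 0, 0, A, B⟩

/-- The Weierstrass curve `y² = x³ + Ax² + Cx`, to which a Montgomery curve
`B·y² = x³ + A·x² + x` is `k`-isomorphic. -/
def montgomeryLike {k : Type*} [CommRing k] (A C : k) : WeierstrassCurve k :=
  ⟨0, A, 0, C, 0⟩

/-- Let `k` be a field of characteristic different from `2` and
`E : y² = x³ + ax + b` an elliptic curve over `k`.  The following are equivalent:
(i) some admissible change of Weierstrass variables over `k` transforms `E` into a curve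
`y² = x³ + Ax² + Cx` with `C` a nonzero square in `k` (i.e. `E` admits a Montgomery model);
(ii) there exists `α ∈ k` with `α³ + aα + b = 0` such that `3α² + a` is a square in `k`. -/
theorem montgomery_model_iff
    {k : Type*} [Field k] (hchar : (2 : k) ≠ 0)
    (a b : k) (hΔ : 4 * a ^ 3 + 27 * b ^ 2 ≠ 0) :
    (∃ (V : VariableChange k) (A C : k), C ≠ 0 ∧ IsSquare C ∧
        V • shortCurve a b = montgomeryLike A C) ↔
      ∃ α : k, α ^ 3 + a * α + b = 0 ∧ IsSquare (3 * α ^ 2 + a) := by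
  constructor
  · rintro ⟨V, A, C, -, ⟨c, hc⟩, h⟩
    have h1 := congrArg WeierstrassCurve.a₁ h
    have h3 := congrArg WeierstrassCurve.a₃ h
    have h4 := congrArg WeierstrassCurve.a₄ h
    have h6 := congrArg WeierstrassCurve.a₆ h
    simp only [variableChange_a₁, variableChange_a₃, variableChange_a₄, variableChange_a₆,
      shortCurve, montgomeryLike] at h1 h3 h4 h6
    have hv : ((V.u⁻¹ : kˣ) : k) ≠ 0 := Units.ne_zero _
    have huv : (V.u : k) * ((V.u⁻¹ : kˣ) : k) = 1 := V.u.mul_inv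
    generalize ((V.u⁻¹ : kˣ) : k) = v at *
    have ht : V.t = 0 := by simpa [hv, hchar] using h3
    have hs : V.s = 0 := by simpa [hv, hchar] using h1
    rw [ht, hs] at h4
    rw [ht] at h6
    refine ⟨V.r, ?_, V.u ^ 2 * c, ?_⟩
    · have := (mul_eq_zero.mp h6).resolve_left (pow_ne_zero 6 hv)
      linear_combination this
    · have h4' : v ^ 4 * (3 * V.r ^ 2 + a) = c * c := by
        rw [← hc, ← h4]; ring
      have e : (V.u : k) ^ 4 * v ^ 4 = 1 := by rw [← mul_pow, huv, one_pow]
      linear_combination (V.u : k) ^ 4 * h4' - (3 * V.r ^ 2 + a) * e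
  · rintro ⟨α, hα, hsq⟩
    refine ⟨⟨1, α, 0, 0⟩, 3 * α, 3 * α ^ 2 + a, ?_, hsq, ?_⟩
    · intro h0
      apply hΔ
      have ha : a = -3 * α ^ 2 := by linear_combination h0
      have hb : b = 2 * α ^ 3 := by linear_combination hα - α * h0
      rw [ha, hb]; ring
    · ext
      · simp [variableChange_a₁, shortCurve, montgomeryLike]
      · simp [variableChange_a₂, shortCurve, montgomeryLike]
      · simp [variableChange_a₃, shortCurve, montgomeryLike]
      · simp [variableChange_a₄, shortCurve, montgomeryLike]; ring
      · simp [variableChange_a₆, shortCurve, montgomeryLike]; linear_combination hα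
end

section
/- Let k be a finite field of odd cardinality q, let E : y² = x³ + ax + b be an elliptic curve over k (4a³ + 27b² ≠ 0), and let ε ∈ k be an element that is not a square. Let E^ε : y² = x³ + aε²x + bε³ be the quadratic twist of E by ε. Then the numbers of k-rational points (affine points together with the point at infinity) satisfy #E(k) + #E^ε(k) = 2q + 2. Equivalently, writing #E(k) = q + 1 − t, one has #E^ε(k) = q + 1 + t: twisting changes the sign of the trace of Frobenius. -/
open WeierstrassCurve

open Classical in
lemma card_shortCurve {k : Type*} [Field k] [Fintype k] (hc : ringChar k ≠ 2)
    (A B : k) (hΔ : 4 * A ^ 3 + 27 * B ^ 2 ≠ 0) :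
    (Nat.card ((shortCurve A B).toAffine.Point) : ℤ) =
      Fintype.card k + 1 + ∑ x : k, quadraticChar k (x ^ 3 + A * x + B) := by
  have h2 : (2 : k) ≠ 0 := Ring.two_ne_zero hc
  have hD : (shortCurve A B).Δ ≠ 0 := by
    have : (shortCurve A B).Δ = -(2 ^ 4 * (4 * A ^ 3 + 27 * B ^ 2)) := by
      simp only [shortCurve, WeierstrassCurve.Δ, WeierstrassCurve.b₂, WeierstrassCurve.b₄,
        WeierstrassCurve.b₆, WeierstrassCurve.b₈]
      ring
    rw [this]
    exact neg_ne_zero.mpr (mul_ne_zero (pow_ne_zero _ h2) hΔ)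
  have key : ∀ x y : k, (shortCurve A B).toAffine.Nonsingular x y ↔
      y ^ 2 = x ^ 3 + A * x + B := by
    intro x y
    rw [← WeierstrassCurve.Affine.equation_iff_nonsingular_of_Δ_ne_zero hD,
      WeierstrassCurve.Affine.equation_iff]
    simp [shortCurve]
  let e : (shortCurve A B).toAffine.Point ≃
      Option (Σ x : k, {y : k // y ^ 2 = x ^ 3 + A * x + B}) :=
    { toFun := fun P => match P with
        | .zero => none
        | .some x y h => some ⟨x, y, (key x y).1 h⟩
      invFun := fun o => match o with
        | none => .zero
        | some ⟨x, y, h⟩ => .some x y ((key x y).2 h)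
      left_inv := by rintro (_ | ⟨x, y, h⟩) <;> rfl
      right_inv := by rintro (_ | ⟨x, y, h⟩) <;> rfl }
  rw [Nat.card_congr e, Nat.card_eq_fintype_card, Fintype.card_option, Fintype.card_sigma]
  push_cast
  have : ∀ x : k, (Fintype.card {y : k // y ^ 2 = x ^ 3 + A * x + B} : ℤ) =
      quadraticChar k (x ^ 3 + A * x + B) + 1 := by
    intro x
    rw [← quadraticChar_card_sqrts hc, Set.toFinset_card]
    rfl
  simp only [this, Finset.sum_add_distrib]
  simp
  ring

/-- Let `k` be a finite field of odd cardinality `q`, let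
`E : y² = x³ + ax + b` be an elliptic curve over `k`, and let `ε ∈ k` be a nonsquare.  Let
`E^ε : y² = x³ + aε²x + bε³` be the quadratic twist of `E` by `ε`.  Then
`#E(k) + #E^ε(k) = 2q + 2`: twisting changes the sign of the trace of Frobenius. -/
theorem card_add_card_twist
    {k : Type*} [Field k] [Fintype k] (hodd : Odd (Fintype.card k))
    (a b : k) (hΔ : 4 * a ^ 3 + 27 * b ^ 2 ≠ 0)
    (ε : k) (hε : ¬ IsSquare ε) :
    Nat.card ((shortCurve a b).toAffine.Point) +
        Nat.card ((shortCurve (a * ε ^ 2) (b * ε ^ 3)).toAffine.Point) =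
      2 * Fintype.card k + 2 := by
  classical
  have hc : ringChar k ≠ 2 := by
    intro h
    have := FiniteField.even_card_of_char_two h
    rcases hodd with ⟨m, hm⟩
    omega
  have hε0 : ε ≠ 0 := by
    rintro rfl
    exact hε IsSquare.zero
  have hχ : quadraticChar k ε = -1 := quadraticChar_neg_one_iff_not_isSquare.mpr hε
  have h1 := card_shortCurve hc a b hΔ
  have h2 := card_shortCurve hc (a * ε ^ 2) (b * ε ^ 3) (by
    have : 4 * (a * ε ^ 2) ^ 3 + 27 * (b * ε ^ 3) ^ 2 =
        ε ^ 6 * (4 * a ^ 3 + 27 * b ^ 2) := by ring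
    rw [this]
    exact mul_ne_zero (pow_ne_zero _ hε0) hΔ)
  have h3 : ∑ x : k, quadraticChar k (x ^ 3 + a * ε ^ 2 * x + b * ε ^ 3) =
      -∑ x : k, quadraticChar k (x ^ 3 + a * x + b) := by
    rw [← Equiv.sum_comp (Equiv.mulLeft₀ ε hε0), ← Finset.sum_neg_distrib]
    refine Finset.sum_congr rfl fun x _ => ?_
    have : (Equiv.mulLeft₀ ε hε0 x) ^ 3 + a * ε ^ 2 * (Equiv.mulLeft₀ ε hε0 x) + b * ε ^ 3 =
        ε ^ 3 * (x ^ 3 + a * x + b) := by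
      change (ε * x) ^ 3 + a * ε ^ 2 * (ε * x) + b * ε ^ 3 = _
      ring
    rw [this, map_mul, map_pow, hχ]
    ring
  have h1' : (Nat.card ((shortCurve a b).toAffine.Point) : ℤ) =
      Fintype.card k + 1 + ∑ x : k, quadraticChar k (x ^ 3 + a * x + b) := by
    convert h1
  have h2' : (Nat.card ((shortCurve (a * ε ^ 2) (b * ε ^ 3)).toAffine.Point) : ℤ) =
      Fintype.card k + 1 + ∑ x : k, quadraticChar k (x ^ 3 + a * ε ^ 2 * x + b * ε ^ 3) := by
    convert h2
  rw [h3] at h2'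
  zify
  rw [h1', h2']
  ring
end
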